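/- Let 𝒟 be regularly varying with exponent γ > 1 and let {G_n}_{n≥1} be generated by the erased configuration model with degree sequences IID(𝒟), coupled with the underlying configuration model multigraph. Then for any δ > 0 and any k such that f^*(k) > 0 (where f^*(k) = k f(k)/E[𝒟] and f is the density of 𝒟), lim_{n→∞} P(|Θ̂_n(k) − Θ_n(k)| > δ) = 0, where Θ_n is the average nearest neighbor rank computed on the configuration model multigraph and Θ̂_n is the one computed on the erased graph. -/

import Mathlib

open MeasureTheory Filter
open scoped ENNReal NNReal BigOperators

namespace ANNDPaper

/-- A function is slowly varying if `l (λ x) / l x → 1` as `x → ∞` for every `λ > 0`. -/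
def SlowlyVarying (l : ℝ → ℝ) : Prop :=
  ∀ lam : ℝ, 0 < lam → Tendsto (fun x => l (lam * x) / l x) atTop (nhds 1)

/-- A function is eventually monotone if it is monotone on some interval `[K, ∞)`. -/
def EventuallyMonotone (l : ℝ → ℝ) : Prop :=
  ∃ K : ℝ, MonotoneOn l (Set.Ici K) ∨ AntitoneOn l (Set.Ici K)

/-- Cumulative distribution function of a mass function on `ℕ`. -/
noncomputable def cdfOf (f : ℕ → ℝ) (k : ℕ) : ℝ := ∑ j ∈ Finset.range (k + 1), f j

/-- Kantorovich–Rubinstein distance between two mass functions on `ℕ`,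
valued in `ℝ≥0∞`. -/
noncomputable def d1 (f g : ℕ → ℝ) : ℝ≥0∞ :=
  ∑' k : ℕ, ENNReal.ofReal |cdfOf f k - cdfOf g k|

/-- Total variation distance between two mass functions on `ℕ`, valued in `ℝ≥0∞`. -/
noncomputable def dtv (f g : ℕ → ℝ) : ℝ≥0∞ :=
  (∑' k : ℕ, ENNReal.ofReal |f k - g k|) / 2

/-- Mean of a mass function on `ℕ`. -/
noncomputable def meanPMF (f : ℕ → ℝ) : ℝ := ∑' k : ℕ, (k : ℝ) * f k

/-- Size-biased version `f^*(k) = k f(k) / E[f]` of a mass function on `ℕ`. -/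
noncomputable def sizeBiased (f : ℕ → ℝ) (k : ℕ) : ℝ := (k : ℝ) * f k / meanPMF f

/-- `L_n`, the sum of the degrees. -/
def degSum {n : ℕ} (d : Fin n → ℕ) : ℕ := ∑ i, d i

/-- Empirical degree density `f_n(k)`. -/
noncomputable def empDens {n : ℕ} (d : Fin n → ℕ) (k : ℕ) : ℝ :=
  (∑ i, if d i = k then (1 : ℝ) else 0) / (n : ℝ)

/-- Size-biased empirical degree density `f_n^*(k)`. -/
noncomputable def empSB {n : ℕ} (d : Fin n → ℕ) (k : ℕ) : ℝ :=
  (∑ i, if d i = k then (k : ℝ) else 0) / (degSum d : ℝ)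

/-- Size-biased empirical cumulative distribution function `F_n^*(ℓ)`. -/
noncomputable def empSBcdf {n : ℕ} (d : Fin n → ℕ) (l : ℕ) : ℝ :=
  (∑ i, if d i ≤ l then (d i : ℝ) else 0) / (degSum d : ℝ)

/-- Empirical joint degree distribution `h_n(k, ℓ)` of a multigraph with degrees `d`
and edge counts `g` (self-loops counted twice). -/
noncomputable def jointDens {n : ℕ} (d : Fin n → ℕ) (g : Fin n → Fin n → ℕ) (k l : ℕ) : ℝ :=
  (∑ i, ∑ j, if d i = k ∧ d j = l then (g i j : ℝ) else 0) / (degSum d : ℝ)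

/-- Average nearest neighbor degree `Φ_n(k)`. -/
noncomputable def ANND {n : ℕ} (d : Fin n → ℕ) (g : Fin n → Fin n → ℕ) (k : ℕ) : ℝ :=
  if 0 < empDens d k then (∑' l : ℕ, jointDens d g k l * (l : ℝ)) / empSB d k else 0

/-- Average nearest neighbor rank `Θ_n(k)`. -/
noncomputable def ANNR {n : ℕ} (d : Fin n → ℕ) (g : Fin n → Fin n → ℕ) (k : ℕ) : ℝ :=
  if 0 < empDens d k then (∑' l : ℕ, jointDens d g k l * empSBcdf d l) / empSB d k else 0

/-- The degree of node `i` in a multigraph with edge counts `g` (self-loops counted twice). -/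
def degOf {n : ℕ} (g : Fin n → Fin n → ℕ) (i : Fin n) : ℕ := ∑ j, g i j

/-- Erased edge counts: self-loops removed, multiple edges merged. -/
def erase {n : ℕ} (g : Fin n → Fin n → ℕ) (i j : Fin n) : ℕ :=
  if i = j then 0 else min (g i j) 1

/-- Degrees after erasure. -/
def eraseDeg {n : ℕ} (g : Fin n → Fin n → ℕ) (i : Fin n) : ℕ := ∑ j, erase g i j

/-- The stubs (half-edges) attached to the nodes, given a degree sequence `d`. -/
abbrev Stubs {n : ℕ} (d : Fin n → ℕ) : Type := (i : Fin n) × Fin (d i)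

/-- A perfect matching of the stubs: a fixed-point-free involution. -/
def Matching {n : ℕ} (d : Fin n → ℕ) : Type :=
  {σ : Equiv.Perm (Stubs d) // ∀ s, σ s ≠ s ∧ σ (σ s) = s}

instance {n : ℕ} (d : Fin n → ℕ) : MeasurableSpace (Matching d) := ⊤

/-- The uniform probability measure on perfect matchings of the stubs. -/
noncomputable def uniformMatching {n : ℕ} (d : Fin n → ℕ) : Measure (Matching d) :=
  (Nat.card (Matching d) : ℝ≥0∞)⁻¹ • Measure.count

/-- The edge counts `G_{ij}` of the configuration-model multigraph determined by a
matching of the stubs: the number of stubs of `i` matched to stubs of `j`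
(self-loops are automatically counted twice). -/
def cmEdges {n : ℕ} (d : Fin n → ℕ) (σ : Matching d) (i j : Fin n) : ℕ :=
  (Finset.univ.filter (fun s : Fin (d i) => ((σ.1 ⟨i, s⟩).1 = j))).card

/-- Parity correction: add `1` to the last coordinate if the total sum is odd,
making the total even. -/
def parityFix (n : ℕ) (x : Fin n → ℕ) (i : Fin n) : ℕ :=
  if (i : ℕ) = n - 1 ∧ (∑ j, x j) % 2 = 1 then x i + 1 else x i

/-- The law of the degree sequence `IID(𝒟)` of length `n`, where `ν` is the law of `𝒟`:
i.i.d. samples with the last one corrected for parity. -/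
noncomputable def iidLaw (n : ℕ) (ν : Measure ℕ) : Measure (Fin n → ℕ) :=
  Measure.map (parityFix n) (Measure.pi fun _ : Fin n => ν)

/-- The joint law of (degree sequence, edge counts) in the configuration model of size `n`
with degree sequence `IID(𝒟)`, where `ν` is the law of `𝒟`: sample the degrees, then an
independent uniform perfect matching of the stubs. -/
noncomputable def cmLaw (n : ℕ) (ν : Measure ℕ) :
    Measure ((Fin n → ℕ) × (Fin n → Fin n → ℕ)) :=
  (iidLaw n ν).bind fun d => (uniformMatching d).map fun σ => (d, cmEdges d σ)

/-!
Let `B` be the total degree of the nodes that lose an edge under erasure. Numerator and denominator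
of `Θ_n(k)`, as well as the ranks it averages, change by `O(B)`, which gives
`|Θ̂_n(k) − Θ_n(k)| ≤ 5 B / N_k` for the number `N_k` of nodes of degree `k`. By the weak law of
large numbers `N_k ≥ c n` with high probability, so it remains to see that `E[B] = o(n)`.

A node `i` loses an edge only if it carries a self-loop or a multiple edge. Exchanging stubs in the
uniform matching bounds the probability of this by `d_i² (2 + 8 Δ) / L_n`, where `Δ` is the largest
degree. Applying this bound to the nodes of degree at most `M` only yields
`E[B | d] ≤ ∑_{d_i > M} d_i + M² (2 + 8 Δ)`. Since `𝒟` has finite mean, the expectation of the first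
term is at most `n τ(M)` with `τ(M) → 0`; as `Δ ≤ M + ∑_{d_i > M} d_i`, it follows that
`E[Δ] = o(n)`, and letting first `n` and then `M` tend to infinity gives `E[B] = o(n)`.
-/

open scoped Finset

lemma abs_div_sub_div_le {a b x y : ℝ} (hb : 0 ≤ b) (hby : b ≤ y) (hx : 0 < x) :
    |a / x - b / y| ≤ (|a - b| + |x - y|) / x := by
  obtain ⟨r, hr₀, hr₁, rfl⟩ : ∃ r, 0 ≤ r ∧ r ≤ 1 ∧ b = r * y :=
    ⟨b / y, div_nonneg hb (hb.trans hby), div_le_one_of_le₀ hby (hb.trans hby),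
      (div_mul_cancel_of_imp fun hy => le_antisymm (hy ▸ hby) hb).symm⟩
  rcases (hb.trans hby).eq_or_lt with rfl | hy
  · simp only [mul_zero, zero_div, sub_zero, abs_div, abs_of_pos hx]
    gcongr
    exact le_add_of_nonneg_right hx.le
  · have hsplit : a / x - r * y / y = ((a - r * y) + r * (y - x)) / x := by
      field_simp
      ring
    rw [hsplit, abs_div, abs_of_pos hx]
    gcongr
    refine (abs_add_le _ _).trans ?_
    rw [abs_mul, abs_of_nonneg hr₀, abs_sub_comm y x]
    gcongr
    exact mul_le_of_le_one_left (abs_nonneg _) hr₁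

section DegreeSequence

variable {n : ℕ} (d : Fin n → ℕ)

/-- The number of nodes of degree `k`, that is `n · f_n(k)`. -/
def degCount (k : ℕ) : ℕ := #{i | d i = k}

/-- The edge counts `G_ij` restricted to the nodes `i` of degree `k`. -/
def edgesFrom (g : Fin n → Fin n → ℕ) (k : ℕ) (i j : Fin n) : ℕ :=
  if d i = k then g i j else 0

/-- `L_n · ∑_ℓ h_n(k, ℓ) F_n^*(ℓ)`, written as the sum of the ranks of the neighbors over all stubs
of degree-`k` nodes. -/
noncomputable def rankSum (g : Fin n → Fin n → ℕ) (k : ℕ) : ℝ :=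
  ∑ i, ∑ j, edgesFrom d g k i j * empSBcdf d (d j)

variable {d} in
lemma le_degSum (i : Fin n) : d i ≤ degSum d :=
  Finset.single_le_sum (fun _ _ => Nat.zero_le _) (Finset.mem_univ i)

lemma mul_degCount_le_degSum (k : ℕ) : k * degCount d k ≤ degSum d :=
  calc k * degCount d k = ∑ i with d i = k, d i := by
        rw [Finset.sum_congr rfl fun i hi => (Finset.mem_filter.1 hi).2, Finset.sum_const,
          smul_eq_mul, mul_comm, degCount]
    _ ≤ degSum d := Finset.sum_le_univ_sum_of_nonneg fun _ => Nat.zero_le _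

lemma empDens_eq_degCount_div (k : ℕ) : empDens d k = degCount d k / n := by
  rw [empDens, degCount, Finset.natCast_card_filter]

lemma empSB_eq_mul_degCount_div (k : ℕ) : empSB d k = k * degCount d k / degSum d := by
  rw [empSB, degCount, Finset.natCast_card_filter, Finset.mul_sum]
  simp only [mul_ite, mul_one, mul_zero]

lemma edgesFrom_le (g : Fin n → Fin n → ℕ) (k : ℕ) (i j : Fin n) :
    edgesFrom d g k i j ≤ g i j := by
  unfold edgesFrom
  split_ifs <;> simp

lemma empSBcdf_nonneg (l : ℕ) : 0 ≤ empSBcdf d l := by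
  unfold empSBcdf
  positivity

lemma sum_ite_le_degSum (l : ℕ) : (∑ i, if d i ≤ l then (d i : ℝ) else 0) ≤ degSum d := by
  rw [degSum, Nat.cast_sum]
  gcongr with i
  split_ifs <;> simp

lemma empSBcdf_le_one (l : ℕ) : empSBcdf d l ≤ 1 :=
  div_le_one_of_le₀ (sum_ite_le_degSum d l) (Nat.cast_nonneg _)

lemma tsum_jointDens_mul_empSBcdf (g : Fin n → Fin n → ℕ) (k : ℕ) :
    ∑' l : ℕ, jointDens d g k l * empSBcdf d l = rankSum d g k / degSum d := by
  have hterm (l : ℕ) : jointDens d g k l * empSBcdf d l =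
      ∑ i, ∑ j, if l = d j then
        edgesFrom d g k i j * empSBcdf d (d j) / degSum d else 0 := by
    simp only [jointDens, div_mul_eq_mul_div, Finset.sum_mul, Finset.sum_div]
    refine Finset.sum_congr rfl fun i _ => Finset.sum_congr rfl fun j _ => ?_
    by_cases hl : l = d j
    · simp [hl, edgesFrom]
    · simp [hl, Ne.symm hl]
  rw [rankSum, Finset.sum_div]
  simp only [hterm, Finset.sum_div]
  exact (hasSum_sum fun i _ => hasSum_sum fun j _ => hasSum_ite_eq (d j) _).tsum_eq

lemma ANNR_eq_rankSum_div (g : Fin n → Fin n → ℕ) {k : ℕ} (hk : k ≠ 0) :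
    ANNR d g k = rankSum d g k / (k * degCount d k) := by
  rw [ANNR, tsum_jointDens_mul_empSBcdf, empDens_eq_degCount_div, empSB_eq_mul_degCount_div]
  rcases (degCount d k).eq_zero_or_pos with hN | hN
  · simp [hN]
  · have hn : 0 < n := hN.trans_le ((Finset.card_le_univ _).trans_eq (Fintype.card_fin n))
    have hL : 0 < degSum d := (by positivity : 0 < k * degCount d k).trans_le
      (mul_degCount_le_degSum d k)
    rw [if_pos (by positivity)]
    field_simp

end DegreeSequence

section Erasure

variable {n : ℕ} (g : Fin n → Fin n → ℕ)

/-- The total degree of the nodes that lose an edge under erasure, which controls the effect of the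
erasure on every degree statistic. -/
def erasureDefect : ℕ := ∑ i with eraseDeg g i ≠ degOf g i, degOf g i

lemma natCast_erasureDefect {R : Type*} [Semiring R] :
    (erasureDefect g : R) = ∑ i, if eraseDeg g i ≠ degOf g i then (degOf g i : R) else 0 := by
  rw [erasureDefect, Nat.cast_sum, Finset.sum_filter]

lemma erase_le (i j : Fin n) : erase g i j ≤ g i j := by
  unfold erase
  split_ifs
  · exact Nat.zero_le _
  · exact min_le_left _ _

variable {g} in
lemma erase_symm (hg : ∀ i j, g i j = g j i) (i j : Fin n) : erase g i j = erase g j i := by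
  simp only [erase, hg i j, eq_comm]

lemma eraseDeg_le_degOf (i : Fin n) : eraseDeg g i ≤ degOf g i :=
  Finset.sum_le_sum fun j _ => erase_le g i j

variable {g} in
lemma erase_eq_of_eraseDeg_eq {i : Fin n} (hi : eraseDeg g i = degOf g i) (j : Fin n) :
    erase g i j = g i j :=
  (Finset.sum_eq_sum_iff_of_le fun j _ => erase_le g i j).1 hi j (Finset.mem_univ j)

variable {g} in
lemma exists_of_eraseDeg_ne {i : Fin n} (hi : eraseDeg g i ≠ degOf g i) :
    0 < g i i ∨ ∃ j ≠ i, 1 < g i j := by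
  contrapose! hi
  refine Finset.sum_congr rfl fun j _ => ?_
  by_cases hij : i = j
  · subst hij
    simpa [erase, eq_comm] using hi.1
  · simpa [erase, hij] using hi.2 j (Ne.symm hij)

lemma abs_sum_degOf_sub_sum_eraseDeg_le {φ : ℕ → ℝ} (hφ₀ : ∀ m, 0 ≤ φ m) (hφ : ∀ m, φ m ≤ m) :
    |∑ i, φ (degOf g i) - ∑ i, φ (eraseDeg g i)| ≤ erasureDefect g := by
  rw [← Finset.sum_sub_distrib, natCast_erasureDefect]
  refine (Finset.abs_sum_le_sum_abs _ _).trans (Finset.sum_le_sum fun i _ => ?_)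
  split_ifs with hi
  · exact abs_sub_le_of_nonneg_of_le (hφ₀ _) (hφ _) (hφ₀ _)
      ((hφ _).trans (Nat.cast_le.2 (eraseDeg_le_degOf g i)))
  · simp [not_not.1 hi]

lemma abs_degSum_sub_degSum_eraseDeg_le :
    |(degSum (degOf g) : ℝ) - degSum (eraseDeg g)| ≤ erasureDefect g := by
  simp only [degSum, Nat.cast_sum]
  exact abs_sum_degOf_sub_sum_eraseDeg_le g (fun m => Nat.cast_nonneg m) fun _ => le_rfl

lemma abs_degCount_sub_degCount_eraseDeg_le {k : ℕ} (hk : k ≠ 0) :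
    |(degCount (degOf g) k : ℝ) - degCount (eraseDeg g) k| ≤ erasureDefect g := by
  simp only [degCount, Finset.natCast_card_filter]
  refine abs_sum_degOf_sub_sum_eraseDeg_le g (φ := fun m => if m = k then 1 else 0)
    (fun m => by positivity) fun m => ?_
  split_ifs with hm
  · exact_mod_cast Nat.one_le_iff_ne_zero.2 (hm ▸ hk)
  · exact Nat.cast_nonneg m

variable {g} in
lemma abs_empSBcdf_sub_empSBcdf_eraseDeg_le (hL : 0 < degSum (degOf g)) (l : ℕ) :
    |empSBcdf (degOf g) l - empSBcdf (eraseDeg g) l| ≤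
      2 * erasureDefect g / degSum (degOf g) := by
  have hnum : |(∑ i, if degOf g i ≤ l then (degOf g i : ℝ) else 0) -
      ∑ i, if eraseDeg g i ≤ l then (eraseDeg g i : ℝ) else 0| ≤ erasureDefect g := by
    refine abs_sum_degOf_sub_sum_eraseDeg_le g (φ := fun m => if m ≤ l then (m : ℝ) else 0)
      (fun m => by positivity) fun m => ?_
    split_ifs <;> simp
  refine (abs_div_sub_div_le (by positivity) (sum_ite_le_degSum _ l) (by positivity)).trans ?_
  rw [two_mul]
  gcongr
  exact abs_degSum_sub_degSum_eraseDeg_le g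

variable {g} in
lemma abs_rank_sub_rank_eraseDeg_le (hL : 0 < degSum (degOf g)) (j : Fin n) :
    |empSBcdf (degOf g) (degOf g j) - empSBcdf (eraseDeg g) (eraseDeg g j)| ≤
      2 * erasureDefect g / degSum (degOf g) +
        if eraseDeg g j ≠ degOf g j then 1 else 0 := by
  split_ifs with hj
  · exact (abs_sub_le_of_nonneg_of_le (empSBcdf_nonneg _ _) (empSBcdf_le_one _ _)
      (empSBcdf_nonneg _ _) (empSBcdf_le_one _ _)).trans (le_add_of_nonneg_left (by positivity))
  · rw [not_not.1 hj, add_zero]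
    exact abs_empSBcdf_sub_empSBcdf_eraseDeg_le hL _

lemma sum_abs_edges_sub_edges_erase_le (k : ℕ) :
    ∑ i, ∑ j, |(edgesFrom (degOf g) g k i j : ℝ) - edgesFrom (eraseDeg g) (erase g) k i j| ≤
      erasureDefect g := by
  rw [natCast_erasureDefect]
  gcongr with i
  split_ifs with hi
  · rw [degOf, Nat.cast_sum]
    gcongr with j
    refine abs_sub_le_of_nonneg_of_le (Nat.cast_nonneg _) ?_ (Nat.cast_nonneg _) ?_
    · exact Nat.cast_le.2 (edgesFrom_le _ g k i j)
    · exact Nat.cast_le.2 ((edgesFrom_le _ (erase g) k i j).trans (erase_le g i j))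
  · simp [edgesFrom, not_not.1 hi, erase_eq_of_eraseDeg_eq (not_not.1 hi)]

variable {g} in
lemma sum_erase_mul_abs_rank_sub_le (hg : ∀ i j, g i j = g j i) (hL : 0 < degSum (degOf g)) :
    ∑ i, ∑ j, (erase g i j : ℝ) *
      |empSBcdf (degOf g) (degOf g j) - empSBcdf (eraseDeg g) (eraseDeg g j)| ≤
        3 * erasureDefect g := by
  set B := (erasureDefect g : ℝ) with hB
  set L := (degSum (degOf g) : ℝ)
  set δ : Fin n → ℝ := fun j =>
    |empSBcdf (degOf g) (degOf g j) - empSBcdf (eraseDeg g) (eraseDeg g j)|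
  have hcol (j : Fin n) : ∑ i, (erase g i j : ℝ) ≤ degOf g j := by
    simp only [erase_symm hg _ j]
    exact_mod_cast eraseDeg_le_degOf g j
  calc ∑ i, ∑ j, (erase g i j : ℝ) * δ j
      = ∑ j, (∑ i, (erase g i j : ℝ)) * δ j := by
        rw [Finset.sum_comm]
        simp only [Finset.sum_mul]
    _ ≤ ∑ j, (degOf g j : ℝ) * (2 * B / L + if eraseDeg g j ≠ degOf g j then 1 else 0) := by
        gcongr with j
        · exact hcol j
        · exact abs_rank_sub_rank_eraseDeg_le hL j
    _ = L * (2 * B / L) + B := by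
        simp only [mul_add, Finset.sum_add_distrib, ← Finset.sum_mul, mul_ite, mul_one, mul_zero,
          hB, natCast_erasureDefect, L, degSum, Nat.cast_sum]
    _ = 3 * B := by
        have : L ≠ 0 := by positivity
        field_simp
        ring

variable {g} in
lemma abs_rankSum_sub_rankSum_erase_le (hg : ∀ i j, g i j = g j i) (hL : 0 < degSum (degOf g))
    (k : ℕ) :
    |rankSum (degOf g) g k - rankSum (eraseDeg g) (erase g) k| ≤ 4 * erasureDefect g := by
  set w : Fin n → Fin n → ℝ := fun i j => edgesFrom (degOf g) g k i j
  set w' : Fin n → Fin n → ℝ := fun i j => edgesFrom (eraseDeg g) (erase g) k i j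
  set r : Fin n → ℝ := fun j => empSBcdf (degOf g) (degOf g j)
  set r' : Fin n → ℝ := fun j => empSBcdf (eraseDeg g) (eraseDeg g j)
  have hterm (i j : Fin n) :
      |w i j * r j - w' i j * r' j| ≤ |w i j - w' i j| + erase g i j * |r j - r' j| :=
    calc |w i j * r j - w' i j * r' j|
        = |(w i j - w' i j) * r j + w' i j * (r j - r' j)| := by ring_nf
      _ ≤ |w i j - w' i j| * r j + w' i j * |r j - r' j| := by
          refine (abs_add_le _ _).trans_eq ?_
          rw [abs_mul, abs_mul, abs_of_nonneg (empSBcdf_nonneg _ _), Nat.abs_cast]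
      _ ≤ |w i j - w' i j| + erase g i j * |r j - r' j| := by
          gcongr
          · exact mul_le_of_le_one_right (abs_nonneg _) (empSBcdf_le_one _ _)
          · exact Nat.cast_le.2 (edgesFrom_le _ _ _ _ _)
  calc |∑ i, ∑ j, w i j * r j - ∑ i, ∑ j, w' i j * r' j|
      ≤ ∑ i, ∑ j, |w i j * r j - w' i j * r' j| := by
        simp only [← Finset.sum_sub_distrib]
        exact (Finset.abs_sum_le_sum_abs _ _).trans
          (Finset.sum_le_sum fun i _ => Finset.abs_sum_le_sum_abs _ _)
    _ ≤ ∑ i, ∑ j, |w i j - w' i j| + ∑ i, ∑ j, erase g i j * |r j - r' j| := by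
        simp only [← Finset.sum_add_distrib]
        exact Finset.sum_le_sum fun i _ => Finset.sum_le_sum fun j _ => hterm i j
    _ ≤ 4 * erasureDefect g := by
        linarith [sum_abs_edges_sub_edges_erase_le g k, sum_erase_mul_abs_rank_sub_le hg hL]

lemma rankSum_nonneg (d : Fin n → ℕ) (k : ℕ) : 0 ≤ rankSum d g k :=
  Finset.sum_nonneg fun _ _ => Finset.sum_nonneg fun _ _ =>
    mul_nonneg (by positivity) (empSBcdf_nonneg _ _)

lemma rankSum_le_mul_degCount (k : ℕ) :
    rankSum (degOf g) g k ≤ k * degCount (degOf g) k := by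
  simp only [rankSum, edgesFrom, degCount, Finset.natCast_card_filter, Finset.mul_sum]
  gcongr with i
  split_ifs with hi
  · calc ∑ j, (g i j : ℝ) * empSBcdf (degOf g) (degOf g j) ≤ ∑ j, (g i j : ℝ) := by
          gcongr with j
          exact mul_le_of_le_one_right (Nat.cast_nonneg _) (empSBcdf_le_one _ _)
      _ = k * 1 := by rw [mul_one, ← hi, degOf, Nat.cast_sum]
  · simp

variable {g} in
theorem abs_ANNR_erase_sub_ANNR_le (hg : ∀ i j, g i j = g j i) {k : ℕ} (hk : k ≠ 0)
    (hN : 0 < degCount (degOf g) k) :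
    |ANNR (eraseDeg g) (erase g) k - ANNR (degOf g) g k| ≤
      5 * erasureDefect g / degCount (degOf g) k := by
  have hkN : 0 < k * degCount (degOf g) k := by positivity
  have hrank := abs_rankSum_sub_rankSum_erase_le hg
    (hkN.trans_le (mul_degCount_le_degSum _ k)) k
  have hcount := abs_degCount_sub_degCount_eraseDeg_le g hk
  have hk' : (1 : ℝ) ≤ k := by exact_mod_cast Nat.one_le_iff_ne_zero.2 hk
  rw [abs_sub_comm, ANNR_eq_rankSum_div _ _ hk, ANNR_eq_rankSum_div _ _ hk]
  calc |rankSum (degOf g) g k / (k * degCount (degOf g) k) -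
        rankSum (eraseDeg g) (erase g) k / (k * degCount (eraseDeg g) k)|
      ≤ (|rankSum (degOf g) g k - rankSum (eraseDeg g) (erase g) k| +
          |(k * degCount (degOf g) k - k * degCount (eraseDeg g) k : ℝ)|) /
            (k * degCount (degOf g) k) :=
        abs_div_sub_div_le (rankSum_nonneg _ _ k) (rankSum_le_mul_degCount (erase g) k)
          (by exact_mod_cast hkN)
    _ ≤ (4 * (k * erasureDefect g) + k * erasureDefect g) / (k * degCount (degOf g) k) := by
        rw [← mul_sub, abs_mul, Nat.abs_cast]
        gcongr
        exact hrank.trans (by gcongr; exact le_mul_of_one_le_left (Nat.cast_nonneg _) hk')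
    _ = 5 * erasureDefect g / degCount (degOf g) k := by
        field_simp
        ring

end Erasure

section Matching

variable {n : ℕ} {d : Fin n → ℕ}

lemma degOf_cmEdges (σ : Matching d) : degOf (cmEdges d σ) = d := by
  ext i
  calc degOf (cmEdges d σ) i = #(Finset.univ : Finset (Fin (d i))) :=
        (Finset.card_eq_sum_card_fiberwise fun s _ => Finset.mem_univ (σ.1 ⟨i, s⟩).1).symm
    _ = d i := by simp

lemma cmEdges_eq_card_stubs (σ : Matching d) (i j : Fin n) :
    cmEdges d σ i j = #{s : Stubs d | s.1 = i ∧ (σ.1 s).1 = j} := by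
  refine Finset.card_bij (fun s _ => ⟨i, s⟩) (fun s hs => ?_) (fun s _ t _ hst => ?_) fun s hs => ?_
  · simpa using hs
  · simpa using hst
  · obtain ⟨rfl, hj⟩ := (Finset.mem_filter.1 hs).2
    exact ⟨s.2, by simpa using hj, rfl⟩

lemma cmEdges_symm (σ : Matching d) (i j : Fin n) : cmEdges d σ i j = cmEdges d σ j i := by
  rw [cmEdges_eq_card_stubs, cmEdges_eq_card_stubs]
  refine Finset.card_nbij' σ.1 σ.1 ?_ ?_ (fun s _ => (σ.2 s).2) fun s _ => (σ.2 s).2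
  all_goals
    intro s hs
    simpa [(σ.2 s).2, and_comm] using hs

/-- Relabelling of the stubs by a permutation, acting on matchings by conjugation. -/
def Matching.conj (τ : Equiv.Perm (Stubs d)) : Matching d ≃ Matching d :=
  τ.permCongr.subtypeEquiv fun σ => by
    simp [← τ.forall_congr_right (q := fun s => _ ≠ s ∧ _ = s)]

lemma Matching.conj_swap_apply_of_ne {σ : Matching d} {t v w : Stubs d} (hv : t ≠ v)
    (hw : t ≠ w) : (Matching.conj (Equiv.swap v w) σ).1 t = Equiv.swap v w (σ.1 t) := by
  change Equiv.swap v w (σ.1 ((Equiv.swap v w).symm t)) = _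
  rw [Equiv.symm_swap, Equiv.swap_apply_of_ne_of_ne hv hw]

end Matching

section UniformMatching

variable {n : ℕ} {d : Fin n → ℕ}

instance : Finite (Matching d) := Subtype.finite

instance : DiscreteMeasurableSpace (Matching d) := ⟨fun _ => MeasurableSpace.measurableSet_top⟩

/-- If `degSum d` is odd, there is no matching and the measure vanishes. -/
instance : IsZeroOrProbabilityMeasure (uniformMatching d) := by
  have : uniformMatching d = ProbabilityTheory.cond Measure.count Set.univ := by
    simp [uniformMatching, ProbabilityTheory.cond, Measure.count_univ, ENat.card_eq_coe_natCard]
  rw [this]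
  infer_instance

lemma uniformMatching_le_of_mapsTo_conj {τ : Equiv.Perm (Stubs d)} {S T : Set (Matching d)}
    (h : Set.MapsTo (Matching.conj τ) S T) : uniformMatching d S ≤ uniformMatching d T := by
  simp only [uniformMatching, Measure.smul_apply]
  gcongr _ • ?_
  rw [← Measure.count_injective_image (Matching.conj τ).injective S]
  exact measure_mono h.image_subset

lemma card_stubs : Fintype.card (Stubs d) = degSum d := by
  simp [degSum]

/-- The partner of `t` is exchangeable among the stubs outside `E`, so that each of these is hit
with the same probability. -/
lemma degSum_mul_uniformMatching_inter_le {E : Finset (Stubs d)} {S : Set (Matching d)}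
    (hS : ∀ v ∉ E, ∀ w ∉ E, Set.MapsTo (Matching.conj (Equiv.swap v w)) S S)
    {t v : Stubs d} (ht : t ∈ E) (hv : v ∉ E) :
    degSum d * uniformMatching d (S ∩ {σ | σ.1 t = v}) ≤ (#E + 1) * uniformMatching d S := by
  have hswap (w : Stubs d) (hw : w ∈ Eᶜ) :
      uniformMatching d (S ∩ {σ | σ.1 t = v}) ≤ uniformMatching d (S ∩ {σ | σ.1 t = w}) := by
    rw [Finset.mem_compl] at hw
    refine uniformMatching_le_of_mapsTo_conj (τ := Equiv.swap v w) fun σ hσ => ?_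
    refine ⟨hS v hv w hw hσ.1, ?_⟩
    change _ = w
    rw [Matching.conj_swap_apply_of_ne (ne_of_mem_of_not_mem ht hv) (ne_of_mem_of_not_mem ht hw),
      show σ.1 t = v from hσ.2, Equiv.swap_apply_left]
  have hcard : degSum d ≤ (#E + 1) * #Eᶜ := by
    have hpos : 0 < #Eᶜ := Finset.card_pos.2 ⟨v, Finset.mem_compl.2 hv⟩
    rw [← card_stubs, ← Finset.card_add_card_compl E, add_one_mul]
    gcongr
    exact Nat.le_mul_of_pos_right _ hpos
  have hdisj : Set.PairwiseDisjoint (Eᶜ : Finset (Stubs d)) fun w => S ∩ {σ | σ.1 t = w} :=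
    fun w _ w' _ hne => Set.disjoint_left.2 fun σ hσ hσ' => hne (hσ.2.symm.trans hσ'.2)
  calc degSum d * uniformMatching d (S ∩ {σ | σ.1 t = v})
      ≤ ((#E + 1) * #Eᶜ : ℕ) * uniformMatching d (S ∩ {σ | σ.1 t = v}) := by gcongr
    _ = (#E + 1) * ∑ _w ∈ Eᶜ, uniformMatching d (S ∩ {σ | σ.1 t = v}) := by
        rw [Finset.sum_const, nsmul_eq_mul]
        push_cast
        ring
    _ ≤ (#E + 1) * ∑ w ∈ Eᶜ, uniformMatching d (S ∩ {σ | σ.1 t = w}) := by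
        gcongr _ * ?_
        exact Finset.sum_le_sum hswap
    _ = (#E + 1) * uniformMatching d (⋃ w ∈ Eᶜ, S ∩ {σ | σ.1 t = w}) := by
        rw [measure_biUnion_finset hdisj fun _ _ => .of_discrete]
    _ ≤ (#E + 1) * uniformMatching d S := by
        gcongr
        exact Set.iUnion₂_subset fun _ _ => Set.inter_subset_left

lemma degSum_mul_uniformMatching_match_le (s u : Stubs d) :
    degSum d * uniformMatching d {σ | σ.1 s = u} ≤ 2 := by
  by_cases hus : u = s
  · have hempty : {σ : Matching d | σ.1 s = u} = ∅ :=
      Set.eq_empty_of_forall_notMem fun σ hσ => (σ.2 s).1 (Eq.trans hσ hus)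
    simp [hempty]
  · calc degSum d * uniformMatching d {σ | σ.1 s = u}
        = degSum d * uniformMatching d (Set.univ ∩ {σ | σ.1 s = u}) := by rw [Set.univ_inter]
      _ ≤ (#{s} + 1) * uniformMatching d Set.univ :=
          degSum_mul_uniformMatching_inter_le (fun _ _ _ _ => Set.mapsTo_univ _ _)
            (Finset.mem_singleton_self s) (by simpa using hus)
      _ ≤ (#{s} + 1) * 1 := by
          gcongr
          exact prob_le_one
      _ = 2 := by
          rw [Finset.card_singleton]
          norm_num

lemma degSum_sq_mul_uniformMatching_match_inter_match_le {s t u : Stubs d} (hst : s ≠ t)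
    (hut : u ≠ t) (v : Stubs d) :
    degSum d ^ 2 * uniformMatching d {σ | σ.1 s = u ∧ σ.1 t = v} ≤ 8 := by
  by_cases hv : v ∈ ({s, t, u} : Finset (Stubs d))
  · have hempty : {σ : Matching d | σ.1 s = u ∧ σ.1 t = v} = ∅ := by
      refine Set.eq_empty_of_forall_notMem fun σ ⟨hsu, htv⟩ => ?_
      simp only [Finset.mem_insert, Finset.mem_singleton] at hv
      rcases hv with rfl | rfl | rfl
      · exact hut (by rw [← hsu, ← htv, (σ.2 t).2])
      · exact (σ.2 v).1 htv
      · exact hst (σ.1.injective (hsu.trans htv.symm))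
    simp [hempty]
  · have hinv : ∀ v ∉ ({s, t, u} : Finset (Stubs d)), ∀ w ∉ ({s, t, u} : Finset (Stubs d)),
        Set.MapsTo (Matching.conj (Equiv.swap v w)) {σ | σ.1 s = u} {σ | σ.1 s = u} := by
      intro v hv w hw σ hσ
      simp only [Finset.mem_insert, Finset.mem_singleton, not_or] at hv hw
      change _ = u
      rw [Matching.conj_swap_apply_of_ne (Ne.symm hv.1) (Ne.symm hw.1),
        show σ.1 s = u from hσ, Equiv.swap_apply_of_ne_of_ne (Ne.symm hv.2.2) (Ne.symm hw.2.2)]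
    calc degSum d ^ 2 * uniformMatching d {σ | σ.1 s = u ∧ σ.1 t = v}
        = degSum d * (degSum d * uniformMatching d ({σ | σ.1 s = u} ∩ {σ | σ.1 t = v})) := by
          rw [pow_two, mul_assoc, Set.ofPred_and]
      _ ≤ degSum d * ((#{s, t, u} + 1) * uniformMatching d {σ | σ.1 s = u}) := by
          gcongr _ * ?_
          exact degSum_mul_uniformMatching_inter_le hinv (by simp) hv
      _ ≤ degSum d * ((3 + 1) * uniformMatching d {σ | σ.1 s = u}) := by
          gcongr
          exact_mod_cast Finset.card_le_three
      _ = 4 * (degSum d * uniformMatching d {σ | σ.1 s = u}) := by ring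
      _ ≤ 4 * 2 := by
          gcongr
          exact degSum_mul_uniformMatching_match_le s u
      _ = 8 := by norm_num

end UniformMatching

lemma mul_measure_iUnion_le_card_mul {α ι : Type*} [MeasurableSpace α] [Fintype ι] {μ : Measure α}
    {A : ι → Set α} {c b : ℝ≥0∞} (h : ∀ x, c * μ (A x) ≤ b) :
    c * μ (⋃ x, A x) ≤ Fintype.card ι * b :=
  calc c * μ (⋃ x, A x) ≤ c * ∑ x, μ (A x) := by
        gcongr
        exact measure_iUnion_fintype_le μ A
    _ = ∑ x, c * μ (A x) := Finset.mul_sum _ _ _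
    _ ≤ ∑ _x : ι, b := Finset.sum_le_sum fun x _ => h x
    _ = Fintype.card ι * b := by rw [Finset.sum_const, nsmul_eq_mul, Finset.card_univ]

section ErasureUnderUniformMatching

variable {n : ℕ} (d : Fin n → ℕ)

/-- The largest degree, which is `0` for the empty degree sequence. -/
def maxDegree : ℕ := Finset.univ.sup d

/-- The total degree of the nodes of degree larger than `M`. -/
def tailDegree (M : ℕ) : ℕ := ∑ i with M < d i, d i

lemma le_maxDegree (i : Fin n) : d i ≤ maxDegree d := Finset.le_sup (Finset.mem_univ i)

lemma sum_sq_le_maxDegree_mul_degSum : ∑ i, d i ^ 2 ≤ maxDegree d * degSum d := by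
  rw [degSum, Finset.mul_sum]
  gcongr with i
  rw [pow_two]
  gcongr
  exact le_maxDegree d i

lemma maxDegree_le_tailDegree_add (M : ℕ) : maxDegree d ≤ tailDegree d M + M := by
  refine Finset.sup_le fun i _ => ?_
  rcases le_or_gt (d i) M with hi | hi
  · exact le_add_left hi
  · exact le_add_right
      (Finset.single_le_sum (f := d) (fun _ _ => Nat.zero_le _) (by simpa using hi))

lemma degSum_mul_uniformMatching_loop_le (i : Fin n) :
    degSum d * uniformMatching d {σ | 0 < cmEdges d σ i i} ≤ (d i) ^ 2 * 2 := by
  have hsub : {σ | 0 < cmEdges d σ i i} ⊆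
      ⋃ p : Fin (d i) × Fin (d i), {σ : Matching d | σ.1 ⟨i, p.1⟩ = ⟨i, p.2⟩} := by
    intro σ hσ
    obtain ⟨a, ha⟩ := Finset.card_pos.1 hσ
    have hai : (σ.1 ⟨i, a⟩).1 = i := (Finset.mem_filter.1 ha).2
    exact Set.mem_iUnion.2 ⟨(a, hai ▸ (σ.1 ⟨i, a⟩).2), Sigma.ext hai (by simp)⟩
  calc degSum d * uniformMatching d {σ | 0 < cmEdges d σ i i}
      ≤ degSum d * uniformMatching d (⋃ p : Fin (d i) × Fin (d i),
          {σ : Matching d | σ.1 ⟨i, p.1⟩ = ⟨i, p.2⟩}) := by gcongr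
    _ ≤ Fintype.card (Fin (d i) × Fin (d i)) * 2 :=
        mul_measure_iUnion_le_card_mul fun _ => degSum_mul_uniformMatching_match_le _ _
    _ = (d i) ^ 2 * 2 := by simp [pow_two]

lemma degSum_sq_mul_uniformMatching_multiEdge_le (i : Fin n) :
    degSum d ^ 2 * uniformMatching d {σ | ∃ j ≠ i, 1 < cmEdges d σ i j} ≤
      (d i) ^ 2 * (∑ j, (d j) ^ 2 : ℕ) * 8 := by
  let pairs := (j : Fin n) × ((Fin (d i) × Fin (d i)) × (Fin (d j) × Fin (d j)))
  let A : pairs → Set (Matching d) := fun ⟨j, (a, b), (u, v)⟩ =>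
    {σ | j ≠ i ∧ a ≠ b ∧ σ.1 ⟨i, a⟩ = ⟨j, u⟩ ∧ σ.1 ⟨i, b⟩ = ⟨j, v⟩}
  have hsub : {σ | ∃ j ≠ i, 1 < cmEdges d σ i j} ⊆ ⋃ p, A p := by
    rintro σ ⟨j, hji, hj⟩
    obtain ⟨a, ha, b, hb, hab⟩ := Finset.one_lt_card.1 hj
    have haj : (σ.1 ⟨i, a⟩).1 = j := (Finset.mem_filter.1 ha).2
    have hbj : (σ.1 ⟨i, b⟩).1 = j := (Finset.mem_filter.1 hb).2
    exact Set.mem_iUnion.2 ⟨⟨j, (a, b), (haj ▸ (σ.1 ⟨i, a⟩).2, hbj ▸ (σ.1 ⟨i, b⟩).2)⟩, hji, hab,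
      Sigma.ext haj (by simp), Sigma.ext hbj (by simp)⟩
  have hA : ∀ p, degSum d ^ 2 * uniformMatching d (A p) ≤ 8 := by
    rintro ⟨j, ⟨a, b⟩, ⟨u, v⟩⟩
    by_cases h : j ≠ i ∧ a ≠ b
    · refine le_trans ?_ (degSum_sq_mul_uniformMatching_match_inter_match_le
        (s := ⟨i, a⟩) (t := ⟨i, b⟩) (u := ⟨j, u⟩) (by simpa using h.2)
        (fun huv => h.1 (congrArg Sigma.fst huv)) ⟨j, v⟩)
      gcongr
      exact fun σ hσ => hσ.2.2
    · have hempty : A ⟨j, (a, b), (u, v)⟩ = ∅ :=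
        Set.eq_empty_of_forall_notMem fun σ hσ => h ⟨hσ.1, hσ.2.1⟩
      simp [hempty]
  calc (degSum d : ℝ≥0∞) ^ 2 * uniformMatching d {σ | ∃ j ≠ i, 1 < cmEdges d σ i j}
      ≤ (degSum d : ℝ≥0∞) ^ 2 * uniformMatching d (⋃ p, A p) := by gcongr
    _ ≤ (Fintype.card pairs : ℝ≥0∞) * 8 := mul_measure_iUnion_le_card_mul hA
    _ = (d i : ℝ≥0∞) ^ 2 * (∑ j, (d j) ^ 2 : ℕ) * 8 := by simp [pairs, pow_two, Finset.mul_sum]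

lemma degSum_mul_uniformMatching_eraseDeg_ne_le (i : Fin n) :
    degSum d * uniformMatching d {σ | eraseDeg (cmEdges d σ) i ≠ d i} ≤
      (d i) ^ 2 * (2 + 8 * maxDegree d) := by
  set L : ℝ≥0∞ := (degSum d : ℝ≥0∞) with hL
  rcases (degSum d).eq_zero_or_pos with hL₀ | hL₀
  · simp [hL, hL₀]
  have hcancel {x y : ℝ≥0∞} (h : L * x ≤ L * y) : x ≤ y :=
    (ENNReal.mul_le_mul_iff_right (by positivity) (ENNReal.natCast_ne_top _)).1 h
  have hsub : {σ | eraseDeg (cmEdges d σ) i ≠ d i} ⊆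
      {σ | 0 < cmEdges d σ i i} ∪ {σ | ∃ j ≠ i, 1 < cmEdges d σ i j} := fun σ hσ =>
    exists_of_eraseDeg_ne (by rwa [degOf_cmEdges])
  have hmulti : L * uniformMatching d {σ | ∃ j ≠ i, 1 < cmEdges d σ i j} ≤
      (d i) ^ 2 * (8 * maxDegree d) := hcancel <|
    calc L * (L * uniformMatching d {σ | ∃ j ≠ i, 1 < cmEdges d σ i j})
        = L ^ 2 * uniformMatching d {σ | ∃ j ≠ i, 1 < cmEdges d σ i j} := by ring
      _ ≤ (d i) ^ 2 * (∑ j, (d j) ^ 2 : ℕ) * 8 := degSum_sq_mul_uniformMatching_multiEdge_le d i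
      _ ≤ (d i) ^ 2 * (maxDegree d * degSum d : ℕ) * 8 := by
          gcongr
          exact sum_sq_le_maxDegree_mul_degSum d
      _ = L * ((d i) ^ 2 * (8 * maxDegree d)) := by
          push_cast
          ring
  calc L * uniformMatching d {σ | eraseDeg (cmEdges d σ) i ≠ d i}
      ≤ L * (uniformMatching d {σ | 0 < cmEdges d σ i i} +
          uniformMatching d {σ | ∃ j ≠ i, 1 < cmEdges d σ i j}) := by
        gcongr
        exact (measure_mono hsub).trans (measure_union_le _ _)
    _ ≤ (d i) ^ 2 * 2 + (d i) ^ 2 * (8 * maxDegree d) := by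
        rw [mul_add]
        exact add_le_add (degSum_mul_uniformMatching_loop_le d i) hmulti
    _ = (d i) ^ 2 * (2 + 8 * maxDegree d) := by ring

lemma lintegral_erasureDefect_cmEdges :
    ∫⁻ σ, (erasureDefect (cmEdges d σ) : ℝ≥0∞) ∂uniformMatching d =
      ∑ i, d i * uniformMatching d {σ | eraseDeg (cmEdges d σ) i ≠ d i} := by
  simp only [natCast_erasureDefect, degOf_cmEdges]
  rw [lintegral_finsetSum _ fun _ _ => Measurable.of_discrete]
  refine Finset.sum_congr rfl fun i _ => ?_
  rw [← lintegral_indicator_const .of_discrete]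
  simp only [Set.indicator_apply, Set.mem_ofPred_eq]

theorem lintegral_erasureDefect_cmEdges_le (M : ℕ) :
    ∫⁻ σ, (erasureDefect (cmEdges d σ) : ℝ≥0∞) ∂uniformMatching d ≤
      tailDegree d M + M ^ 2 * (2 + 8 * maxDegree d) := by
  rw [lintegral_erasureDefect_cmEdges]
  set L : ℝ≥0∞ := (degSum d : ℝ≥0∞) with hL
  set bad : Fin n → ℝ≥0∞ := fun i => uniformMatching d {σ | eraseDeg (cmEdges d σ) i ≠ d i}
  rcases (degSum d).eq_zero_or_pos with hL₀ | hL₀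
  · have hd (i : Fin n) : d i = 0 := Nat.eq_zero_of_le_zero (hL₀ ▸ le_degSum i)
    simp [hd]
  have hnode (i : Fin n) : L * (d i * bad i) ≤
      L * (if M < d i then (d i : ℝ≥0∞) else 0) + d i * (M ^ 2 * (2 + 8 * maxDegree d)) := by
    split_ifs with hi
    · refine le_add_right ?_
      gcongr
      exact mul_le_of_le_one_right' prob_le_one
    · rw [mul_zero, zero_add, mul_left_comm]
      gcongr _ * ?_
      refine (degSum_mul_uniformMatching_eraseDeg_ne_le d i).trans ?_
      gcongr
      exact not_lt.1 hi
  refine (ENNReal.mul_le_mul_iff_right (a := L) (by positivity) (ENNReal.natCast_ne_top _)).1 ?_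
  calc L * ∑ i, d i * bad i = ∑ i, L * (d i * bad i) := Finset.mul_sum _ _ _
    _ ≤ ∑ i, (L * (if M < d i then (d i : ℝ≥0∞) else 0) +
          d i * (M ^ 2 * (2 + 8 * maxDegree d))) := Finset.sum_le_sum fun i _ => hnode i
    _ = L * (tailDegree d M + M ^ 2 * (2 + 8 * maxDegree d)) := by
        rw [Finset.sum_add_distrib, ← Finset.mul_sum, ← Finset.sum_mul, ← Finset.sum_filter,
          ← Nat.cast_sum, ← Nat.cast_sum, ← tailDegree, ← degSum, ← hL, ← mul_add]

end ErasureUnderUniformMatching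

lemma tendsto_const_div_natCast_zero {a : ℝ≥0∞} (ha : a ≠ ∞) :
    Tendsto (fun n : ℕ => a / n) atTop (nhds 0) := by
  simpa only [ENNReal.div_top] using
    ENNReal.Tendsto.const_div ENNReal.tendsto_nat_nhds_top (.inr ha)

lemma tendsto_zero_of_le_add {ι κ : Type*} {l : Filter ι} {m : Filter κ} [m.NeBot] {u : ι → ℝ≥0∞}
    {a : κ → ℝ≥0∞} {b : κ → ι → ℝ≥0∞} (h : ∀ M i, u i ≤ a M + b M i)
    (ha : Tendsto a m (nhds 0)) (hb : ∀ M, Tendsto (b M) l (nhds 0)) : Tendsto u l (nhds 0) := by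
  rw [ENNReal.tendsto_nhds_zero] at ha ⊢
  intro ε hε
  have hε₂ : 0 < ε / 2 := ENNReal.half_pos hε.ne'
  obtain ⟨M, hM⟩ := (ha (ε / 2) hε₂).exists
  filter_upwards [ENNReal.tendsto_nhds_zero.1 (hb M) (ε / 2) hε₂] with i hi
  exact (h M i).trans ((add_le_add hM hi).trans_eq (ENNReal.add_halves ε))

lemma tendsto_setLIntegral_Ici_zero {μ : Measure ℕ} {f : ℕ → ℝ≥0∞} (hf : ∫⁻ x, f x ∂μ ≠ ∞) :
    Tendsto (fun M => ∫⁻ x in Set.Ici M, f x ∂μ) atTop (nhds 0) := by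
  have : IsFiniteMeasure (μ.withDensity f) := isFiniteMeasure_withDensity hf
  have hinter : ⋂ M : ℕ, Set.Ici M = ∅ :=
    Set.iInter_eq_empty_iff.2 fun x => ⟨x + 1, by simp⟩
  have htendsto := tendsto_measure_iInter_atTop (μ := μ.withDensity f)
    (fun M : ℕ => MeasurableSet.nullMeasurableSet (.of_discrete (s := Set.Ici M)))
    (fun _ _ h => Set.Ici_subset_Ici.2 h) ⟨0, measure_ne_top _ _⟩
  rw [hinter, measure_empty] at htendsto
  exact htendsto.congr fun M => withDensity_apply f .of_discrete

lemma tendsto_setLIntegral_Ici_add_one_zero {ν : Measure ℕ} [IsFiniteMeasure ν]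
    (hν : ∫⁻ x, (x : ℝ≥0∞) ∂ν ≠ ∞) :
    Tendsto (fun M => ∫⁻ x in Set.Ici M, ((x : ℝ≥0∞) + 1) ∂ν) atTop (nhds 0) := by
  refine tendsto_setLIntegral_Ici_zero ?_
  rw [lintegral_add_right _ measurable_const, lintegral_const, one_mul]
  exact ENNReal.add_ne_top.2 ⟨hν, measure_ne_top ν _⟩

theorem tendsto_pi_sum_le_mul_zero {α : Type*} [MeasurableSpace α] (ν : Measure α)
    [IsProbabilityMeasure ν] {Y : α → ℝ} (hY : MemLp Y 2 ν) {c : ℝ} (hc : c < ∫ x, Y x ∂ν) :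
    Tendsto (fun n => Measure.pi (fun _ : Fin n => ν) {x | ∑ i, Y (x i) ≤ c * n})
      atTop (nhds 0) := by
  set m := ∫ x, Y x ∂ν
  set V := ProbabilityTheory.variance Y ν
  have hbound : ∀ᶠ n : ℕ in atTop, Measure.pi (fun _ : Fin n => ν) {x | ∑ i, Y (x i) ≤ c * n} ≤
      ENNReal.ofReal (V / (m - c) ^ 2 / n) := by
    filter_upwards [eventually_gt_atTop 0] with n hn
    set P := Measure.pi fun _ : Fin n => ν
    set X : (Fin n → α) → ℝ := ∑ i, fun x => Y (x i) with hX
    have hYi (i : Fin n) : MemLp (fun x : Fin n → α => Y (x i)) 2 P :=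
      hY.comp_measurePreserving (measurePreserving_eval _ i)
    have hmean : ∫ x, X x ∂P = n * m := by
      simp only [hX, Finset.sum_apply]
      rw [integral_finsetSum _ fun i _ => (hYi i).integrable one_le_two]
      simp [P, integral_comp_eval (μ := fun _ : Fin n => ν) hY.aestronglyMeasurable, m]
    have hvar : ProbabilityTheory.variance X P = n * V := by
      rw [ProbabilityTheory.variance_sum_pi fun _ => hY]
      simp [V]
    have hpos : 0 < (m - c) * n := mul_pos (sub_pos.2 hc) (Nat.cast_pos.2 hn)
    calc P {x | ∑ i, Y (x i) ≤ c * n} ≤ P {x | (m - c) * n ≤ |X x - ∫ x, X x ∂P|} := by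
          refine measure_mono fun x hx => ?_
          have hXx : X x ≤ c * n := by simpa [hX] using hx
          rw [Set.mem_ofPred_eq, hmean, abs_sub_comm]
          exact (by linarith : (m - c) * n ≤ n * m - X x).trans (le_abs_self _)
      _ ≤ ENNReal.ofReal (ProbabilityTheory.variance X P / ((m - c) * n) ^ 2) :=
          ProbabilityTheory.meas_ge_le_variance_div_sq (memLp_finsetSum' _ fun i _ => hYi i) hpos
      _ = ENNReal.ofReal (V / (m - c) ^ 2 / n) := by
          rw [hvar]
          congr 1
          field_simp
  refine tendsto_of_tendsto_of_tendsto_of_le_of_le' tendsto_const_nhds ?_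
    (Eventually.of_forall fun _ => zero_le) hbound
  simpa using ENNReal.tendsto_ofReal (tendsto_const_div_atTop_nhds_zero_nat (V / (m - c) ^ 2))

section IIDDegrees

variable {n : ℕ}

lemma parityFix_le (x : Fin n → ℕ) (i : Fin n) : parityFix n x i ≤ x i + 1 := by
  unfold parityFix
  split_ifs <;> simp

lemma degCount_le_degCount_parityFix_add_one (x : Fin n → ℕ) (k : ℕ) :
    degCount x k ≤ degCount (parityFix n x) k + 1 := by
  have hsub : ({i | x i = k} : Finset (Fin n)) ⊆
      ({i | parityFix n x i = k} : Finset (Fin n)) ∪ ({i | (i : ℕ) = n - 1} : Finset (Fin n)) := by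
    intro i hi
    by_cases hlast : (i : ℕ) = n - 1
    · simp [hlast]
    · have hfix : parityFix n x i = x i := if_neg fun h => hlast h.1
      rw [Finset.mem_filter_univ] at hi
      simp [hfix, hi]
  have hlast : #{i : Fin n | (i : ℕ) = n - 1} ≤ 1 :=
    Finset.card_le_one.2 fun i hi j hj => Fin.ext (by simp_all)
  exact (Finset.card_le_card hsub).trans ((Finset.card_union_le _ _).trans
    (Nat.add_le_add_left hlast _))

variable (ν : Measure ℕ) [IsProbabilityMeasure ν]

instance : IsProbabilityMeasure (iidLaw n ν) :=
  Measure.isProbabilityMeasure_map (Measurable.of_discrete.aemeasurable)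

lemma lintegral_tailDegree_iidLaw_le (M : ℕ) :
    ∫⁻ d, (tailDegree d M : ℝ≥0∞) ∂iidLaw n ν ≤
      n * ∫⁻ x in Set.Ici M, ((x : ℝ≥0∞) + 1) ∂ν := by
  set h : ℕ → ℝ≥0∞ := (Set.Ici M).indicator fun x => (x : ℝ≥0∞) + 1 with hh
  have hle (x : Fin n → ℕ) : (tailDegree (parityFix n x) M : ℝ≥0∞) ≤ ∑ i, h (x i) := by
    rw [tailDegree, Nat.cast_sum, Finset.sum_filter]
    gcongr with i
    split_ifs with hi
    · have hMi : M ≤ x i := Nat.le_of_lt_succ (hi.trans_le (parityFix_le x i))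
      rw [hh, Set.indicator_of_mem (Set.mem_Ici.2 hMi)]
      exact_mod_cast parityFix_le x i
    · exact zero_le
  calc ∫⁻ d, (tailDegree d M : ℝ≥0∞) ∂iidLaw n ν
      = ∫⁻ x, (tailDegree (parityFix n x) M : ℝ≥0∞) ∂Measure.pi fun _ : Fin n => ν :=
        lintegral_map .of_discrete .of_discrete
    _ ≤ ∫⁻ x, ∑ i, h (x i) ∂Measure.pi fun _ : Fin n => ν := lintegral_mono hle
    _ = ∑ _i : Fin n, ∫⁻ x, h x ∂ν := by
        rw [lintegral_finsetSum _ fun _ _ => Measurable.of_discrete]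
        exact Finset.sum_congr rfl fun i _ =>
          (measurePreserving_eval (fun _ : Fin n => ν) i).lintegral_comp .of_discrete
    _ = n * ∫⁻ x in Set.Ici M, ((x : ℝ≥0∞) + 1) ∂ν := by
        rw [hh, lintegral_indicator .of_discrete, Finset.sum_const, Finset.card_univ,
          Fintype.card_fin, nsmul_eq_mul]

theorem tendsto_lintegral_maxDegree_iidLaw_div (hν : ∫⁻ x, (x : ℝ≥0∞) ∂ν ≠ ∞) :
    Tendsto (fun n : ℕ => (∫⁻ d, (maxDegree d : ℝ≥0∞) ∂iidLaw n ν) / n) atTop (nhds 0) := by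
  refine tendsto_zero_of_le_add (b := fun (M n : ℕ) => (M : ℝ≥0∞) / n) (fun M n => ?_)
    (tendsto_setLIntegral_Ici_add_one_zero hν) fun M => ?_
  · calc (∫⁻ d, (maxDegree d : ℝ≥0∞) ∂iidLaw n ν) / n
        ≤ (∫⁻ d, ((tailDegree d M : ℝ≥0∞) + M) ∂iidLaw n ν) / n := by
          gcongr with d
          exact_mod_cast maxDegree_le_tailDegree_add d M
      _ ≤ (n * ∫⁻ x in Set.Ici M, ((x : ℝ≥0∞) + 1) ∂ν + M) / n := by
          rw [lintegral_add_right _ measurable_const, lintegral_const, measure_univ, mul_one]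
          gcongr
          exact lintegral_tailDegree_iidLaw_le ν M
      _ ≤ ∫⁻ x in Set.Ici M, ((x : ℝ≥0∞) + 1) ∂ν + M / n := by
          rw [ENNReal.add_div]
          gcongr
          exact ENNReal.div_le_of_le_mul' le_rfl
  · exact tendsto_const_div_natCast_zero (ENNReal.natCast_ne_top M)

theorem tendsto_iidLaw_degCount_le_mul_zero {k : ℕ} {c : ℝ} (hc : c < ν.real {k}) :
    Tendsto (fun n => iidLaw n ν {d | (degCount d k : ℝ) ≤ c * n}) atTop (nhds 0) := by
  obtain ⟨c', hcc', hc'⟩ := exists_between hc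
  set Y : ℕ → ℝ := ({k} : Set ℕ).indicator 1
  have hY : MemLp Y 2 ν := memLp_indicator_const 2 .of_discrete 1 (.inr (measure_ne_top _ _))
  have hYint : ∫ x, Y x ∂ν = ν.real {k} := integral_indicator_one .of_discrete
  have hsum (n : ℕ) (x : Fin n → ℕ) : ∑ i, Y (x i) = degCount x k := by
    simp only [Y, Set.indicator_apply, Set.mem_singleton_iff, Pi.one_apply, degCount,
      Finset.natCast_card_filter]
  have hlarge : ∀ᶠ n : ℕ in atTop, 1 ≤ (c' - c) * n :=
    (tendsto_natCast_atTop_atTop.const_mul_atTop (sub_pos.2 hcc')).eventually_ge_atTop 1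
  refine tendsto_of_tendsto_of_tendsto_of_le_of_le' tendsto_const_nhds
    (tendsto_pi_sum_le_mul_zero ν hY (hYint ▸ hc')) (.of_forall fun _ => zero_le) ?_
  filter_upwards [hlarge] with n hn
  rw [iidLaw, Measure.map_apply .of_discrete .of_discrete]
  refine measure_mono fun x (hx : (degCount (parityFix n x) k : ℝ) ≤ c * n) => ?_
  have hfix : (degCount x k : ℝ) ≤ degCount (parityFix n x) k + 1 :=
    mod_cast degCount_le_degCount_parityFix_add_one x k
  rw [Set.mem_ofPred_eq, hsum]
  linarith

end IIDDegrees

section ConfigurationModel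

variable (n : ℕ) (ν : Measure ℕ)

lemma cmLaw_apply (s : Set ((Fin n → ℕ) × (Fin n → Fin n → ℕ))) :
    cmLaw n ν s = ∫⁻ d, uniformMatching d {σ | (d, cmEdges d σ) ∈ s} ∂iidLaw n ν := by
  rw [cmLaw, Measure.bind_apply .of_discrete (Measurable.of_discrete.aemeasurable)]
  exact lintegral_congr fun d => Measure.map_apply .of_discrete .of_discrete

lemma lintegral_cmLaw (F : (Fin n → ℕ) × (Fin n → Fin n → ℕ) → ℝ≥0∞) :
    ∫⁻ p, F p ∂cmLaw n ν =
      ∫⁻ d, ∫⁻ σ, F (d, cmEdges d σ) ∂uniformMatching d ∂iidLaw n ν := by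
  rw [cmLaw, Measure.lintegral_bind (Measurable.of_discrete.aemeasurable)
    (Measurable.of_discrete.aemeasurable)]
  exact lintegral_congr fun d => lintegral_map .of_discrete .of_discrete

variable {n} in
lemma ae_cmLaw_of_forall {P : (Fin n → ℕ) × (Fin n → Fin n → ℕ) → Prop}
    (h : ∀ d σ, P (d, cmEdges d σ)) : ∀ᵐ p ∂cmLaw n ν, P p := by
  rw [ae_iff, cmLaw_apply]
  simp [h]

variable {n} in
lemma cmLaw_fst_mem_le (A : Set (Fin n → ℕ)) : cmLaw n ν {p | p.1 ∈ A} ≤ iidLaw n ν A := by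
  rw [cmLaw_apply, ← lintegral_indicator_one .of_discrete]
  gcongr with d
  by_cases hd : d ∈ A
  · simpa [hd] using prob_le_one
  · simp [hd]

theorem tendsto_lintegral_erasureDefect_cmLaw_div [IsProbabilityMeasure ν]
    (hν : ∫⁻ x, (x : ℝ≥0∞) ∂ν ≠ ∞) :
    Tendsto (fun n : ℕ => (∫⁻ p, (erasureDefect p.2 : ℝ≥0∞) ∂cmLaw n ν) / n) atTop (nhds 0) := by
  set tail : ℕ → ℝ≥0∞ := fun M => ∫⁻ x in Set.Ici M, ((x : ℝ≥0∞) + 1) ∂ν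
  set Δ : ℕ → ℝ≥0∞ := fun n => ∫⁻ d, (maxDegree d : ℝ≥0∞) ∂iidLaw n ν
  refine tendsto_zero_of_le_add (b := fun (M n : ℕ) => M ^ 2 * (2 / n + 8 * (Δ n / n)))
    (fun M n => ?_) (tendsto_setLIntegral_Ici_add_one_zero hν) fun M => ?_
  · calc (∫⁻ p, (erasureDefect p.2 : ℝ≥0∞) ∂cmLaw n ν) / n
        ≤ (∫⁻ d, (tailDegree d M + M ^ 2 * (2 + 8 * maxDegree d) : ℝ≥0∞) ∂iidLaw n ν) / n := by
          rw [lintegral_cmLaw]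
          gcongr with d
          exact lintegral_erasureDefect_cmEdges_le d M
      _ = (∫⁻ d, (tailDegree d M : ℝ≥0∞) ∂iidLaw n ν + M ^ 2 * (2 + 8 * Δ n)) / n := by
          rw [lintegral_add_left .of_discrete, lintegral_const_mul _ .of_discrete,
            lintegral_add_left measurable_const, lintegral_const_mul _ .of_discrete,
            lintegral_const, measure_univ, mul_one]
      _ ≤ (n * tail M + M ^ 2 * (2 + 8 * Δ n)) / n := by
          gcongr
          exact lintegral_tailDegree_iidLaw_le ν M
      _ ≤ tail M + M ^ 2 * (2 / n + 8 * (Δ n / n)) := by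
          rw [ENNReal.add_div, mul_div_assoc (M ^ 2 : ℝ≥0∞), ENNReal.add_div, mul_div_assoc 8]
          gcongr
          exact ENNReal.div_le_of_le_mul' le_rfl
  · have hΔ : Tendsto (fun n : ℕ => 8 * (Δ n / n)) atTop (nhds 0) := by
      simpa using ENNReal.Tendsto.const_mul (tendsto_lintegral_maxDegree_iidLaw_div ν hν)
        (.inr (ENNReal.ofNat_ne_top (n := 8)))
    simpa using ENNReal.Tendsto.const_mul
      ((tendsto_const_div_natCast_zero ENNReal.ofNat_ne_top).add hΔ)
      (.inr (ENNReal.pow_ne_top (ENNReal.natCast_ne_top M)))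

lemma tendsto_cmLaw_le_erasureDefect_div_zero [IsProbabilityMeasure ν]
    (hν : ∫⁻ x, (x : ℝ≥0∞) ∂ν ≠ ∞) {ε : ℝ≥0∞} (hε : ε ≠ 0) (hε' : ε ≠ ∞) :
    Tendsto (fun n : ℕ => cmLaw n ν {p | ε ≤ (erasureDefect p.2 : ℝ≥0∞) / n}) atTop (nhds 0) := by
  have hlim := ENNReal.Tendsto.div_const (tendsto_lintegral_erasureDefect_cmLaw_div ν hν)
    (.inr hε)
  rw [ENNReal.zero_div] at hlim
  refine tendsto_of_tendsto_of_tendsto_of_le_of_le tendsto_const_nhds hlim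
    (fun _ => zero_le) fun n => ?_
  refine (meas_ge_le_lintegral_div (Measurable.of_discrete.aemeasurable) hε hε').trans_eq ?_
  simp only [div_eq_mul_inv]
  rw [lintegral_mul_const _ .of_discrete]

variable {n} in
lemma le_erasureDefect_div_of_lt_abs_ANNR_sub {g : Fin n → Fin n → ℕ}
    (hg : ∀ i j, g i j = g j i) {k : ℕ} (hk : k ≠ 0) {c δ : ℝ} (hc : 0 ≤ c)
    (hcount : c * n < degCount (degOf g) k) (hδ : 0 ≤ δ)
    (hlt : δ < |ANNR (eraseDeg g) (erase g) k - ANNR (degOf g) g k|) :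
    ENNReal.ofReal (δ * c / 5) ≤ (erasureDefect g : ℝ≥0∞) / n := by
  have hN : (0 : ℝ) < degCount (degOf g) k := hcount.trans_le' (by positivity)
  have hdefect : δ * c / 5 * n ≤ erasureDefect g := by
    have hbound := hlt.le.trans (abs_ANNR_erase_sub_ANNR_le hg hk (Nat.cast_pos.1 hN))
    rw [le_div_iff₀ hN] at hbound
    have := mul_le_mul_of_nonneg_left hcount.le hδ
    linarith
  have hn : n ≠ 0 := by
    rintro rfl
    simp [degCount] at hN
  rw [ENNReal.le_div_iff_mul_le (.inl (Nat.cast_ne_zero.2 hn)) (.inl (ENNReal.natCast_ne_top n)),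
    ← ENNReal.ofReal_natCast n, ← ENNReal.ofReal_mul (by positivity),
    ← ENNReal.ofReal_natCast (erasureDefect g)]
  exact ENNReal.ofReal_le_ofReal hdefect

end ConfigurationModel

lemma ne_zero_of_sizeBiased_pos {f : ℕ → ℝ} {k : ℕ} (hk : 0 < sizeBiased f k) :
    k ≠ 0 ∧ f k ≠ 0 ∧ meanPMF f ≠ 0 := by
  simpa only [sizeBiased, ne_eq, div_eq_zero_iff, mul_eq_zero, Nat.cast_eq_zero, not_or,
    and_assoc] using hk.ne'

lemma lintegral_natCast_ne_top_of_meanPMF_ne_zero {ν : Measure ℕ} [IsFiniteMeasure ν] {f : ℕ → ℝ}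
    (hf : ∀ k, f k = (ν {k}).toReal) (h : meanPMF f ≠ 0) : ∫⁻ x, (x : ℝ≥0∞) ∂ν ≠ ∞ := by
  -- A divergent `meanPMF` would be `0`, the value of `∑'` on non-summable families.
  have hsummable : Summable fun j : ℕ => (j : ℝ) * f j := by
    by_contra hdiv
    exact h (tsum_eq_zero_of_not_summable hdiv)
  rw [lintegral_countable']
  convert hsummable.tsum_ofReal_ne_top using 3 with j
  rw [hf, ENNReal.ofReal_mul (Nat.cast_nonneg j), ENNReal.ofReal_natCast,
    ENNReal.ofReal_toReal (measure_ne_top ν _)]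

theorem stmt12_general (ν : Measure ℕ) [IsProbabilityMeasure ν] (hν : ∫⁻ x, (x : ℝ≥0∞) ∂ν ≠ ∞)
    {k : ℕ} (hk : k ≠ 0) (hνk : ν {k} ≠ 0) {δ : ℝ} (hδ : 0 < δ) :
    Tendsto (fun n : ℕ => cmLaw n ν
        {p | δ < |ANNR (eraseDeg p.2) (erase p.2) k - ANNR p.1 p.2 k|})
      atTop (nhds 0) := by
  set c := ν.real {k} / 2
  have hνk' : 0 < ν.real {k} := ENNReal.toReal_pos hνk (measure_ne_top ν _)
  have hε : 0 < ENNReal.ofReal (δ * c / 5) := ENNReal.ofReal_pos.2 (by positivity)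
  have hlim := (tendsto_iidLaw_degCount_le_mul_zero ν (half_lt_self hνk')).add
    (tendsto_cmLaw_le_erasureDefect_div_zero ν hν hε.ne' ENNReal.ofReal_ne_top)
  rw [add_zero] at hlim
  refine tendsto_of_tendsto_of_tendsto_of_le_of_le tendsto_const_nhds hlim (fun _ => zero_le)
    fun n => ?_
  let large : Set ((Fin n → ℕ) × (Fin n → Fin n → ℕ)) :=
    {p | δ < |ANNR (eraseDeg p.2) (erase p.2) k - ANNR p.1 p.2 k|}
  let sparse : Set (Fin n → ℕ) := {d | (degCount d k : ℝ) ≤ c * n}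
  let defective : Set ((Fin n → ℕ) × (Fin n → Fin n → ℕ)) :=
    {p | ENNReal.ofReal (δ * c / 5) ≤ (erasureDefect p.2 : ℝ≥0∞) / n}
  have hae : large ≤ᵐ[cmLaw n ν] ({p | p.1 ∈ sparse} ∪ defective : Set _) := by
    refine ae_cmLaw_of_forall ν fun d σ hlt => or_iff_not_imp_left.2 fun hd => ?_
    have hdeg := degOf_cmEdges σ
    refine le_erasureDefect_div_of_lt_abs_ANNR_sub (cmEdges_symm σ) hk (by positivity) ?_ hδ.le
      (by rwa [hdeg])
    rw [hdeg]
    exact not_le.1 hd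
  calc cmLaw n ν large ≤ cmLaw n ν {p | p.1 ∈ sparse} + cmLaw n ν defective :=
        (measure_mono_ae hae).trans (measure_union_le _ _)
    _ ≤ iidLaw n ν sparse + cmLaw n ν defective := by
        gcongr
        exact cmLaw_fst_mem_le ν sparse

/-- For `𝒟` regularly varying with exponent `γ > 1`, the difference
between the ANNR in the erased configuration model and in the configuration model
vanishes in probability: for any `δ > 0` and `k` with `f^*(k) > 0`,
`P(|Θ̂_n(k) − Θ_n(k)| > δ) → 0`. -/
theorem stmt12 (ν : Measure ℕ) [IsProbabilityMeasure ν] (f : ℕ → ℝ)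
    (hf : ∀ k, f k = (ν {k}).toReal) (hzero : ν {0} = 0)
    (γ : ℝ) (hγ : 1 < γ)
    (l : ℝ → ℝ) (hsv : SlowlyVarying l) (hmono : EventuallyMonotone l)
    (hreg : ∀ k : ℕ, 1 ≤ k → f k = l k * (k : ℝ) ^ (-γ - 1))
    (k : ℕ) (hk : 0 < sizeBiased f k)
    (δ : ℝ) (hδ : 0 < δ) :
    Tendsto (fun n : ℕ =>
        ((cmLaw n ν) {p : (Fin n → ℕ) × (Fin n → Fin n → ℕ) |
            δ < |ANNR (eraseDeg p.2) (erase p.2) k - ANNR p.1 p.2 k|}).toReal)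
      atTop (nhds 0) := by
  obtain ⟨hk₀, hfk, hmean⟩ := ne_zero_of_sizeBiased_pos hk
  exact (ENNReal.tendsto_toReal ENNReal.zero_ne_top).comp
    (stmt12_general ν (lintegral_natCast_ne_top_of_meanPMF_ne_zero hf hmean) hk₀
      (fun hνk => hfk (by rw [hf, hνk, ENNReal.toReal_zero])) hδ)

end ANNDPaper
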